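/- (Additional property of the Strong Estimator, Lemma 2.8/'add'.) Let p ∈ [1,2], let 0 < ε₂ ≤ ε₁ < 1 and δ ∈ (0,1), let u be a stream of length m, and let (Ω, μ) be a probability space. Let F assign to each ω ∈ Ω an interval estimator F_ω, and assume all events appearing below are μ-measurable. Suppose that for every pair of integers 1 ≤ l' ≤ r' ≤ m, μ({ω : for all [a,b] ⊆ [l',r'], |F_ω^{(a,b)} − ℓ_p^{(a,b)}| ≤ ε₁·ℓ_p^{(a,b)} + ε₂·ℓ_p^{(l',r')}}) ≥ 1 − δ. Then for every pair of integers 1 ≤ l ≤ r ≤ m, μ({ω : for all integers a, b with 1 ≤ a < l ≤ b ≤ r, |F_ω^{(a,b)} − ℓ_p^{(a,b)}| ≤ (ε₁ + 2ε₂)·ℓ_p^{(a,b)} + 2ε₂·ℓ_p^{(l,r)}}) ≥ 1 − δ·(⌊log₂ r⌋ + 2). -/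

import Mathlib

/-!
Write `N a = ℓ_p^{(a,r)}`. Then `1 ≤ N a ≤ r` for `1 ≤ a ≤ r`: the stream element `u r` contributes
at least `1`, and `ℓ_p ≤ ℓ_1` (`one_le_lpnorm`, `lpnorm_le`). For each
dyadic scale `i ≤ ⌊log₂ r⌋` let `c i` be the least start of a window `[c i, r]` with
`N (c i) < 2 ^ (i + 1)` (`exists_scale_start`). If all of these `⌊log₂ r⌋ + 1` windows are good,
then so is every `[a, b]` with `a < l ≤ b ≤ r`: with `2 ^ i ≤ N a < 2 ^ (i + 1)`, the interval
`[a, b]` lies in `[c i, r]` and `N (c i) ≤ 2 * N a`, while Minkowski's inequality applied to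
`[a, r] = [a, b] ∪ [l, r]` gives `N a ≤ ℓ_p^{(a,b)} + ℓ_p^{(l,r)}` (`lpnorm_le_add`). A union bound
over the scales finishes the proof.
-/

open MeasureTheory

/-- `freq u a b i` is the number of times universe item `i` occurs among the
stream elements `u a, …, u b` (the frequency vector entry `x^{(a,b)}_i`). -/
def freq (u : ℕ → ℕ) (a b i : ℕ) : ℕ :=
  ((Finset.Icc a b).filter (fun t => u t = i)).card

/-- `Fmom U u p a b = F_p^{(a,b)} = Σ_{i=1}^U (x^{(a,b)}_i)^p`. -/
noncomputable def Fmom (U : ℕ) (u : ℕ → ℕ) (p : ℝ) (a b : ℕ) : ℝ :=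
  ∑ i ∈ Finset.Icc 1 U, (freq u a b i : ℝ) ^ p

/-- `lpnorm U u p a b = ℓ_p^{(a,b)} = (F_p^{(a,b)})^{1/p}`. -/
noncomputable def lpnorm (U : ℕ) (u : ℕ → ℕ) (p : ℝ) (a b : ℕ) : ℝ :=
  (Fmom U u p a b) ^ (1 / p)

lemma Fmom_nonneg (U : ℕ) (u : ℕ → ℕ) (p : ℝ) (a b : ℕ) : 0 ≤ Fmom U u p a b :=
  Finset.sum_nonneg fun _ _ => Real.rpow_nonneg (Nat.cast_nonneg _) _

/-- Minkowski's inequality, as `[a, b]` and `[l, r]` together cover `[a, r]` when `l ≤ b`. -/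
lemma lpnorm_le_add (U : ℕ) (u : ℕ → ℕ) {p : ℝ} (hp1 : 1 ≤ p) {a b l r : ℕ} (hlb : l ≤ b) :
    lpnorm U u p a r ≤ lpnorm U u p a b + lpnorm U u p l r := by
  have hfreq : ∀ i, freq u a r i ≤ freq u a b i + freq u l r i := by
    intro i
    unfold freq
    refine le_trans (Finset.card_le_card ?_) (Finset.card_union_le _ _)
    intro t
    simp only [Finset.mem_filter, Finset.mem_Icc, Finset.mem_union]
    rintro ⟨⟨h1, h2⟩, h3⟩
    rcases le_total t b with h | h
    · exact Or.inl ⟨⟨h1, h⟩, h3⟩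
    · exact Or.inr ⟨⟨hlb.trans h, h2⟩, h3⟩
  refine le_trans ?_ (Real.Lp_add_le_of_nonneg (Finset.Icc 1 U)
    (f := fun i => (freq u a b i : ℝ)) (g := fun i => (freq u l r i : ℝ)) hp1
    (fun _ _ => Nat.cast_nonneg _) (fun _ _ => Nat.cast_nonneg _))
  unfold lpnorm
  refine Real.rpow_le_rpow (Fmom_nonneg _ _ _ _ _) ?_ (by positivity)
  refine Finset.sum_le_sum fun i _ => ?_
  refine Real.rpow_le_rpow (Nat.cast_nonneg _) ?_ (by positivity)
  exact_mod_cast hfreq i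

lemma sum_rpow_le_rpow_sum_of_one_le {ι : Type*} (s : Finset ι) (f : ι → ℝ) (hf : ∀ i, 0 ≤ f i)
    {p : ℝ} (hp1 : 1 ≤ p) : ∑ i ∈ s, f i ^ p ≤ (∑ i ∈ s, f i) ^ p := by
  classical
  induction s using Finset.induction_on with
  | empty => simpa using Real.rpow_nonneg le_rfl p
  | insert i s hi ih =>
    rw [Finset.sum_insert hi, Finset.sum_insert hi]
    exact (add_le_add_right ih _).trans
      (Real.add_rpow_le_rpow_add (hf i) (Finset.sum_nonneg fun j _ => hf j) hp1)

/-- The `ℓ_p` norm is at most the `ℓ_1` norm, hence at most the number of stream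
elements in `[a, r]`. -/
lemma lpnorm_le (U : ℕ) (u : ℕ → ℕ) {p : ℝ} (hp1 : 1 ≤ p) {a r : ℕ} (ha : 1 ≤ a) :
    lpnorm U u p a r ≤ r := by
  have hsum : ∑ i ∈ Finset.Icc 1 U, freq u a r i ≤ r := by
    unfold freq
    rw [Finset.sum_card_fiberwise_eq_card_filter]
    refine (Finset.card_filter_le _ _).trans ?_
    rw [Nat.card_Icc]
    omega
  have hsum' : ∑ i ∈ Finset.Icc 1 U, (freq u a r i : ℝ) ≤ r := by exact_mod_cast hsum
  have hp0 : 0 < p := by positivity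
  unfold lpnorm
  rw [one_div, Real.rpow_inv_le_iff_of_pos (Fmom_nonneg _ _ _ _ _) (Nat.cast_nonneg _) hp0]
  exact (sum_rpow_le_rpow_sum_of_one_le _ _ (fun _ => Nat.cast_nonneg _) hp1).trans
    (Real.rpow_le_rpow (Finset.sum_nonneg fun _ _ => Nat.cast_nonneg _) hsum' hp0.le)

lemma one_le_lpnorm (U : ℕ) (u : ℕ → ℕ) {p : ℝ} (hp1 : 1 ≤ p) {a r : ℕ} (har : a ≤ r)
    (hur : u r ∈ Finset.Icc 1 U) : 1 ≤ lpnorm U u p a r := by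
  have hfreq : 1 ≤ freq u a r (u r) :=
    Finset.card_pos.mpr ⟨r, by simp [har]⟩
  have hp0 : 0 < p := by positivity
  refine Real.one_le_rpow ?_ (by positivity)
  calc (1 : ℝ) ≤ (freq u a r (u r) : ℝ) ^ p :=
        Real.one_le_rpow (by exact_mod_cast hfreq) hp0.le
    _ ≤ Fmom U u p a r :=
        Finset.single_le_sum (f := fun i => (freq u a r i : ℝ) ^ p)
          (fun _ _ => Real.rpow_nonneg (Nat.cast_nonneg _) _) hur

/-- A single start `c ∈ [1, r]` serves all starts `a ∈ [1, r]` with `N a < B`: it is to the left of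
each of them and satisfies the same bound. If no such `a` exists, any `c` will do. -/
lemma exists_scale_start (N : ℕ → ℝ) (B : ℝ) {r : ℕ} (hr : 1 ≤ r) :
    ∃ c, 1 ≤ c ∧ c ≤ r ∧ ∀ a, 1 ≤ a → a ≤ r → N a < B → c ≤ a ∧ N c < B := by
  classical
  by_cases h : ∃ a, 1 ≤ a ∧ a ≤ r ∧ N a < B
  · obtain ⟨h1, h2, h3⟩ := Nat.find_spec h
    exact ⟨Nat.find h, h1, h2, fun a ha har hN => ⟨Nat.find_min' h ⟨ha, har, hN⟩, h3⟩⟩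
  · exact ⟨1, le_rfl, hr, fun a ha har hN => (h ⟨a, ha, har, hN⟩).elim⟩

/-- Union bound: if `n` measurable events each have probability at least `1 - δ`, any event
containing their intersection has probability at least `1 - δ * n`. -/
lemma ofReal_le_measure_of_iInter_subset {Ω : Type*} [MeasurableSpace Ω] (μ : Measure Ω)
    [IsProbabilityMeasure μ] {δ : ℝ} (n : ℕ)
    (A : ℕ → Set Ω) (T : Set Ω)
    (hA : ∀ i, MeasurableSet (A i)) (hAμ : ∀ i, ENNReal.ofReal (1 - δ) ≤ μ (A i))
    (hT : MeasurableSet T) (hsub : ∀ ω, (∀ i < n, ω ∈ A i) → ω ∈ T) :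
    ENNReal.ofReal (1 - δ * n) ≤ μ T := by
  have hcompl : ∀ i, μ.real (A i)ᶜ ≤ δ := by
    intro i
    rw [probReal_compl_eq_one_sub (hA i)]
    have : 1 - δ ≤ μ.real (A i) := (ENNReal.ofReal_le_iff_le_toReal (measure_ne_top _ _)).mp (hAμ i)
    linarith
  have hTsub : Tᶜ ⊆ ⋃ i ∈ Finset.range n, (A i)ᶜ := by
    intro ω hω
    by_contra hcon
    simp only [Set.mem_iUnion, Finset.mem_range, Set.mem_compl_iff, not_exists, not_not] at hcon
    exact hω (hsub ω hcon)
  have hTc : μ.real Tᶜ ≤ δ * n := calc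
    μ.real Tᶜ ≤ μ.real (⋃ i ∈ Finset.range n, (A i)ᶜ) := measureReal_mono hTsub (measure_ne_top _ _)
    _ ≤ ∑ i ∈ Finset.range n, μ.real (A i)ᶜ := measureReal_biUnion_finset_le _ _
    _ ≤ ∑ _i ∈ Finset.range n, δ := Finset.sum_le_sum fun i _ => hcompl i
    _ = δ * n := by simp [mul_comm]
  rw [probReal_compl_eq_one_sub hT] at hTc
  rw [ENNReal.ofReal_le_iff_le_toReal (measure_ne_top _ _)]
  change 1 - δ * n ≤ μ.real T
  linarith

/-- Additional property of the Strong Estimator (Lemma `add`): if on every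
window, with probability at least `1 - δ`, all subwindow estimates are within
a `(1 ± ε₁)` factor plus an additive `ε₂` fraction of the window's `ℓ_p` norm,
then with probability at least `1 - δ·(⌊log₂ r⌋ + 2)` every interval `[a,b]`
with `a < l ≤ b ≤ r` is estimated within a `(1 ± (ε₁ + 2ε₂))` factor plus an
additive `2ε₂` fraction of `ℓ_p^{(l,r)}`. -/
theorem strong_estimator_additional_property
    (m U : ℕ) (u : ℕ → ℕ) (hu : ∀ t ∈ Finset.Icc 1 m, u t ∈ Finset.Icc 1 U)
    (p ε₁ ε₂ δ : ℝ) (hp1 : 1 ≤ p) (hp2 : p ≤ 2)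
    (hε₂ : 0 < ε₂) (hε₁₂ : ε₂ ≤ ε₁) (hε₁ : ε₁ < 1) (hδ : δ ∈ Set.Ioo (0 : ℝ) 1)
    (Ω : Type*) [MeasurableSpace Ω] (μ : Measure Ω) [IsProbabilityMeasure μ]
    (F : Ω → ℕ → ℕ → ℝ)
    (hmeas : ∀ l' r' : ℕ, MeasurableSet
      {ω : Ω | ∀ a b : ℕ, l' ≤ a → a ≤ b → b ≤ r' →
        |F ω a b - lpnorm U u p a b| ≤
          ε₁ * lpnorm U u p a b + ε₂ * lpnorm U u p l' r'})
    (hgood : ∀ l' r' : ℕ, 1 ≤ l' → l' ≤ r' → r' ≤ m →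
      ENNReal.ofReal (1 - δ) ≤ μ
        {ω : Ω | ∀ a b : ℕ, l' ≤ a → a ≤ b → b ≤ r' →
          |F ω a b - lpnorm U u p a b| ≤
            ε₁ * lpnorm U u p a b + ε₂ * lpnorm U u p l' r'})
    (l r : ℕ) (hl : 1 ≤ l) (hlr : l ≤ r) (hrm : r ≤ m)
    (hmeas' : MeasurableSet
      {ω : Ω | ∀ a b : ℕ, 1 ≤ a → a < l → l ≤ b → b ≤ r →
        |F ω a b - lpnorm U u p a b| ≤
          (ε₁ + 2 * ε₂) * lpnorm U u p a b + 2 * ε₂ * lpnorm U u p l r}) :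
    ENNReal.ofReal (1 - δ * ((Nat.log 2 r : ℝ) + 2)) ≤ μ
      {ω : Ω | ∀ a b : ℕ, 1 ≤ a → a < l → l ≤ b → b ≤ r →
        |F ω a b - lpnorm U u p a b| ≤
          (ε₁ + 2 * ε₂) * lpnorm U u p a b + 2 * ε₂ * lpnorm U u p l r} := by
  classical
  have hr : 1 ≤ r := hl.trans hlr
  choose c hc1 hcr hc using fun i : ℕ =>
    exists_scale_start (fun a => lpnorm U u p a r) ((2 : ℝ) ^ (i + 1)) hr
  have hbound := ofReal_le_measure_of_iInter_subset μ (Nat.log 2 r + 1)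
    (fun i => {ω : Ω | ∀ a b : ℕ, c i ≤ a → a ≤ b → b ≤ r →
        |F ω a b - lpnorm U u p a b| ≤
          ε₁ * lpnorm U u p a b + ε₂ * lpnorm U u p (c i) r})
    _ (fun i => hmeas (c i) r) (fun i => hgood (c i) r (hc1 i) (hcr i) hrm) hmeas' ?_
  · refine le_trans (ENNReal.ofReal_le_ofReal ?_) hbound
    push_cast
    nlinarith [hδ.1]
  · intro ω hω a b ha hal hlb hbr
    have har : a ≤ r := (hal.le.trans hlb).trans hbr
    obtain ⟨i, hi1, hi2⟩ := exists_nat_pow_near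
      (one_le_lpnorm U u hp1 har (hu r (Finset.mem_Icc.mpr ⟨hr, hrm⟩))) (one_lt_two (α := ℝ))
    have hpow : 2 ^ i ≤ r := by exact_mod_cast hi1.trans (lpnorm_le U u hp1 ha)
    have hilog : i < Nat.log 2 r + 1 :=
      Nat.lt_succ_of_le (Nat.le_log_of_pow_le one_lt_two hpow)
    obtain ⟨hca, hcN⟩ := hc i a ha har hi2
    have hest := hω i hilog a b hca (hal.le.trans hlb) hbr
    have hmink := lpnorm_le_add U u hp1 (a := a) (r := r) hlb
    have hcN' : lpnorm U u p (c i) r ≤ 2 * (lpnorm U u p a b + lpnorm U u p l r) := by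
      have : lpnorm U u p (c i) r < 2 ^ (i + 1) := hcN
      rw [pow_succ] at this
      linarith
    have := mul_le_mul_of_nonneg_left hcN' hε₂.le
    linarith
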